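/- arXiv:1704.04308 — 2 statements merged into one kernel-verified Lean document; each statement's English description precedes it below -/
import Mathlib

section
/- Let M be a minimal model of a bouquet of odd algebraic spheres and, for odd k, let M_k be the subalgebra generated by generators of degree ≤ k. Then H^{k+1}(M_k) = 0 and H^{k+2}(M_k) = 0. -/
/-!  Common setup: commutative differential graded algebras (CDGAs) over ℚ,
graded by ℕ, with graded commutativity and the graded Leibniz rule. -/

namespace PaperDGA

structure CDGA : Type 1 where
  carrier : Type
  [ring : Ring carrier]
  [alg : Algebra ℚ carrier]
  grade : ℕ → Submodule ℚ carrier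
  grade_sup : (⨆ i, grade i) = ⊤
  one_mem : (1 : carrier) ∈ grade 0
  mul_mem : ∀ {i j : ℕ} {x y : carrier}, x ∈ grade i → y ∈ grade j → x * y ∈ grade (i + j)
  gcomm : ∀ {i j : ℕ} {x y : carrier}, x ∈ grade i → y ∈ grade j →
      x * y = ((-1 : ℚ) ^ (i * j)) • (y * x)
  d : carrier →ₗ[ℚ] carrier
  d_grade : ∀ {i : ℕ} {x : carrier}, x ∈ grade i → d x ∈ grade (i + 1)
  d_sq : ∀ x, d (d x) = 0
  leibniz : ∀ {i : ℕ} {x : carrier}, x ∈ grade i → ∀ y,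
      d (x * y) = d x * y + ((-1 : ℚ) ^ i) • (x * d y)

attribute [instance] CDGA.ring CDGA.alg

/-- `z` is exact (a coboundary). -/
def CDGA.exactAt (B : CDGA) (z : B.carrier) : Prop := ∃ e, B.d e = z

/-- `B` is connected: its degree-zero part is ℚ·1. -/
def CDGA.connected (B : CDGA) : Prop := ∀ x ∈ B.grade 0, ∃ q : ℚ, x = q • (1 : B.carrier)

/-- Degree-`i` cocycles. -/
def CDGA.Z (B : CDGA) (i : ℕ) : Submodule ℚ B.carrier := B.grade i ⊓ LinearMap.ker B.d

/-- Degree-`i` cohomology, as a ℚ-vector space. -/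
abbrev CDGA.H (B : CDGA) (i : ℕ) :=
  (B.Z i) ⧸ ((B.grade i ⊓ LinearMap.range B.d).comap (B.Z i).subtype)

/-- Finite cohomological dimension: cohomology vanishes above some degree. -/
def CDGA.finCohomDim (C : CDGA) : Prop :=
  ∃ D : ℕ, ∀ j, D < j → ∀ z ∈ C.grade j, C.d z = 0 → C.exactAt z

/-- The submodule spanned by products of two positive-degree elements. -/
def CDGA.posSq (M : CDGA) : Submodule ℚ M.carrier :=
  Submodule.span ℚ {y | ∃ p q : ℕ, 0 < p ∧ 0 < q ∧
    ∃ a ∈ M.grade p, ∃ b ∈ M.grade q, y = a * b}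

/-- A morphism of graded algebras (differential not necessarily respected). -/
structure GAlgHom (B C : CDGA) where
  toFun : B.carrier →ₐ[ℚ] C.carrier
  map_grade : ∀ (i : ℕ), ∀ x ∈ B.grade i, toFun x ∈ C.grade i

/-- A morphism of CDGAs. -/
structure CDGAHom (B C : CDGA) extends GAlgHom B C where
  map_d : ∀ z, toFun (B.d z) = C.d (toFun z)

/-- `f` induces an isomorphism on cohomology in every degree (stated elementwise). -/
def QuasiIso {B C : CDGA} (f : CDGAHom B C) : Prop :=
  ∀ i : ℕ,
    (∀ x ∈ B.grade i, B.d x = 0 → C.exactAt (f.toFun x) → B.exactAt x) ∧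
    (∀ y ∈ C.grade i, C.d y = 0 →
      ∃ x ∈ B.grade i, B.d x = 0 ∧ C.exactAt (y - f.toFun x))

/-- Free generators of a free graded-commutative DGA `M`:
a graded space of generators, with the universal property of the free
graded-commutative algebra. -/
structure FreeGens (M : CDGA) where
  V : ℕ → Submodule ℚ M.carrier
  V_le : ∀ i, V i ≤ M.grade i
  V_pos : V 0 = ⊥
  free : ∀ (C : CDGA) (f : ∀ i : ℕ, ↥(V i) →ₗ[ℚ] C.carrier),
    (∀ (i : ℕ) (v : ↥(V i)), f i v ∈ C.grade i) →
    ∃! g : GAlgHom M C, ∀ (i : ℕ) (v : ↥(V i)), g.toFun ↑v = f i v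

/-- The subalgebra generated by the generators of degree ≤ k. -/
def gensBelow {M : CDGA} (F : FreeGens M) (k : ℕ) : Subalgebra ℚ M.carrier :=
  Algebra.adjoin ℚ {x | ∃ i ≤ k, x ∈ F.V i}

/-- A bouquet of odd algebraic spheres: zero differential, connected,
products of positive-degree elements vanish, no positive even degrees. -/
def IsBouquet (S : CDGA) : Prop :=
  (∀ z, S.d z = 0) ∧ S.connected ∧
  (∀ p q : ℕ, 0 < p → 0 < q → ∀ a ∈ S.grade p, ∀ b ∈ S.grade q, a * b = 0) ∧
  (∀ k : ℕ, 0 < k → S.grade (2 * k) = ⊥)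

/-- `L` is the free commutative DGA `Λ(η) = ℚ ⊕ ℚη` on one generator `η`
of (odd) degree `n`, with zero differential. -/
def IsExterior (L : CDGA) (n : ℕ) (η : L.carrier) : Prop :=
  (∀ z, L.d z = 0) ∧ L.connected ∧ η ∈ L.grade n ∧ η ≠ 0 ∧
  L.grade n = Submodule.span ℚ {η} ∧ (∀ m : ℕ, 0 < m → m ≠ n → L.grade m = ⊥)

/-- The data of an algebraic fibration (relative model algebra)
`(B, d) ↪ (T, d) = (B ⊗ ΛV, d)`, with its filtered space of generators `V n i`
(filtration stage `n`, degree `i`) and its algebraic fiber `ℚ ⊗_B (B ⊗ ΛV)`. -/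
structure FibData (B T : CDGA) (incl : CDGAHom B T) where
  V : ℕ → ℕ → Submodule ℚ T.carrier
  V_le_grade : ∀ n i, V n i ≤ T.grade i
  V_mono : ∀ n i, V n i ≤ V (n + 1) i
  dV0 : ∀ i, ∀ v ∈ V 0 i, ∃ b : B.carrier, T.d v = incl.toFun b
  dV : ∀ n i, ∀ v ∈ V (n + 1) i,
    T.d v ∈ Algebra.adjoin ℚ (Set.range incl.toFun ∪ {w | ∃ m, w ∈ V n m})
  gen : Algebra.adjoin ℚ (Set.range incl.toFun ∪ {w | ∃ n m, w ∈ V n m}) = ⊤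
  fiber : CDGA
  proj : CDGAHom T fiber
  proj_surj : Function.Surjective proj.toFun
  proj_incl : ∀ i : ℕ, 0 < i → ∀ b ∈ B.grade i, proj.toFun (incl.toFun b) = 0
  proj_ker : ∀ z : T.carrier, proj.toFun z = 0 ↔
    z ∈ Submodule.span ℚ {y | ∃ i : ℕ, 0 < i ∧ ∃ b ∈ B.grade i,
      ∃ t : T.carrier, y = incl.toFun b * t}

/-- The fibration has finite-dimensional generating space `V`. -/
def FibData.finite {B T : CDGA} {incl : CDGAHom B T} (fd : FibData B T incl) : Prop :=
  ∃ m : ℕ, (∀ n i, fd.V n i = fd.V m i) ∧ (∀ i, FiniteDimensional ℚ ↥(fd.V m i)) ∧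
    ∃ D : ℕ, ∀ i, D < i → fd.V m i = ⊥

/-- An odd algebraic spherical fibration `B ⊗ Λ(x)` with `deg x = 2k-1`, `dx = β`:
the total CDGA is free over `B` on one odd generator `x`. -/
structure OddSphericalFib (B : CDGA) (k : ℕ) (β : B.carrier) where
  total : CDGA
  incl : CDGAHom B total
  x : total.carrier
  x_grade : x ∈ total.grade (2 * k - 1)
  dx : total.d x = incl.toFun β
  decomp : ∀ z : total.carrier, ∃! p : B.carrier × B.carrier,
    z = incl.toFun p.1 + incl.toFun p.2 * x

/-!
The universal property of `ΛV` does the work. Mapping `M` into the external direct sum of a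
multiplicative family of homogeneous submodules containing the generators shows that the family
exhausts `M`: so the grading of `M` is direct, and an element of degree `n` only involves generators
of degree at most `n`. Hence an exact element of degree `n + 1` has a primitive in `M_n`. If `M_n`
is stable under `d` and every class of degree `n + 1` is represented by some `v ∈ V^{n+1}`, this
gives `H^{n+1}(M_n) = 0`: a cocycle `z` of `M_n` is `v + d e` with `e ∈ M_n`, so `v` lies in
`M_n ∩ V^{n+1} = 0`. When there are no generators of degree `k + 1`, the algebra `M_{k+1} = M_k` is
stable under `d`, and the argument applies to both `n = k` and `n = k + 1`.
-/

namespace GAlgHom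

/-- The identity morphism of graded algebras. -/
def id (B : CDGA) : GAlgHom B B where
  toFun := AlgHom.id ℚ B.carrier
  map_grade _ _ hx := hx

/-- The composition of morphisms of graded algebras. -/
def comp {A B C : CDGA} (g : GAlgHom B C) (f : GAlgHom A B) : GAlgHom A C where
  toFun := g.toFun.comp f.toFun
  map_grade i x hx := g.map_grade i _ (f.map_grade i x hx)

end GAlgHom

namespace CDGA

instance gradedMonoid_grade (B : CDGA) : SetLike.GradedMonoid B.grade where
  one_mem := B.one_mem
  mul_mem _ _ _ _ := B.mul_mem

section DirectSum

variable (B : CDGA) (A : ℕ → Submodule ℚ B.carrier) [SetLike.GradedMonoid A]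
  (hA : ∀ i, A i ≤ B.grade i)

/-- The external direct sum of a multiplicative family of homogeneous submodules. It serves as the
target of morphisms of graded algebras only, so its differential is taken to be zero. -/
noncomputable def directSum : CDGA where
  carrier := DirectSum ℕ fun i => A i
  grade i := LinearMap.range (DirectSum.lof ℚ ℕ (fun i => A i) i)
  grade_sup := by
    refine eq_top_iff.2 fun x _ => ?_
    induction x using DirectSum.induction_on with
    | zero => exact Submodule.zero_mem _
    | of i a => exact Submodule.mem_iSup_of_mem i ⟨a, rfl⟩
    | add x y hx hy => exact Submodule.add_mem _ (hx trivial) (hy trivial)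
  one_mem := ⟨1, rfl⟩
  mul_mem := by
    rintro i j _ _ ⟨a, rfl⟩ ⟨b, rfl⟩
    exact ⟨_, (DirectSum.of_mul_of (A := fun i => A i) a b).symm⟩
  gcomm := by
    rintro i j _ _ ⟨a, rfl⟩ ⟨b, rfl⟩
    simp only [DirectSum.lof_eq_of, DirectSum.of_mul_of]
    rw [← DirectSum.lof_eq_of ℚ, ← DirectSum.lof_eq_of ℚ, ← map_smul]
    exact DirectSum.of_eq_of_gradedMonoid_eq
      (Sigma.subtype_ext (add_comm i j) (B.gcomm (hA i a.2) (hA j b.2)))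
  d := 0
  d_grade _ := Submodule.zero_mem _
  d_sq _ := rfl
  leibniz _ _ := by simp only [LinearMap.zero_apply, zero_mul, mul_zero, smul_zero, add_zero]

/-- The summation map from the external direct sum of a family of homogeneous submodules. -/
noncomputable def directSumCoe : GAlgHom (B.directSum A hA) B where
  toFun := DirectSum.coeAlgHom A
  map_grade := by
    rintro i _ ⟨a, rfl⟩
    exact (DirectSum.coeAlgHom_of A i a).symm ▸ hA i a.2

variable {B A hA} {g : GAlgHom B (B.directSum A hA)}

theorem exists_eq_lof_of_section (hg : (B.directSumCoe A hA).comp g = GAlgHom.id B) {i : ℕ}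
    {x : B.carrier} (hx : x ∈ B.grade i) :
    ∃ hxA : x ∈ A i, g.toFun x = DirectSum.lof ℚ ℕ (fun i => A i) i ⟨x, hxA⟩ := by
  obtain ⟨a, ha⟩ := g.map_grade i x hx
  obtain rfl : (a : B.carrier) = x := calc
    (a : B.carrier) = (B.directSumCoe A hA).toFun (g.toFun x) :=
      ha ▸ (DirectSum.coeAlgHom_of A i a).symm
    _ = x := DFunLike.congr_fun (congrArg GAlgHom.toFun hg) x
  exact ⟨a.2, ha.symm⟩

theorem isInternal_of_section (hg : (B.directSumCoe A hA).comp g = GAlgHom.id B) :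
    DirectSum.IsInternal A := by
  have g_sum (y : DirectSum ℕ fun i => A i) : g.toFun (DirectSum.coeAlgHom A y) = y := by
    induction y using DirectSum.induction_on with
    | zero => simp only [map_zero]; rfl
    | of i a =>
      rw [DirectSum.coeAlgHom_of]
      exact (exists_eq_lof_of_section hg (hA i a.2)).2
    | add y y' hy hy' => rw [map_add, map_add, hy, hy']; rfl
  exact ⟨Function.LeftInverse.injective g_sum,
    Function.RightInverse.surjective fun x => DFunLike.congr_fun (congrArg GAlgHom.toFun hg) x⟩

end DirectSum

theorem exists_mem_grade_d_eq {B : CDGA} (h : DirectSum.IsInternal B.grade) {n : ℕ}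
    {z : B.carrier} (hz : z ∈ B.grade (n + 1)) (hex : B.exactAt z) :
    ∃ e ∈ B.grade n, B.d e = z := by
  let := h.chooseDecomposition
  have d_decompose (x : B.carrier) :
      B.d (DirectSum.decompose B.grade x n) = DirectSum.decompose B.grade (B.d x) (n + 1) := by
    induction x using DirectSum.Decomposition.inductionOn B.grade with
    | zero => simp
    | @homogeneous i x =>
      have hdx := B.d_grade x.2
      obtain rfl | hi := eq_or_ne i n
      · rw [DirectSum.decompose_of_mem_same _ x.2, DirectSum.decompose_of_mem_same _ hdx]
      · rw [DirectSum.decompose_of_mem_ne _ x.2 hi,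
          DirectSum.decompose_of_mem_ne _ hdx ((add_left_injective 1).ne hi), map_zero]
    | add x y hx hy => simp [hx, hy]
  obtain ⟨e, rfl⟩ := hex
  exact ⟨_, (DirectSum.decompose B.grade e n).2,
    (d_decompose e).trans (DirectSum.decompose_of_mem_same _ hz)⟩

theorem d_one (B : CDGA) : B.d 1 = 0 := by
  simpa using B.leibniz B.one_mem 1

theorem d_mem_adjoin {B : CDGA} {s : Set B.carrier} (hs : ∀ x ∈ s, ∃ i, x ∈ B.grade i)
    (hd : ∀ x ∈ s, B.d x ∈ Algebra.adjoin ℚ s) {x : B.carrier} (hx : x ∈ Algebra.adjoin ℚ s) :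
    B.d x ∈ Algebra.adjoin ℚ s := by
  have d_mem_of_monomial (y : B.carrier) (hy : y ∈ Submonoid.closure s) :
      B.d y ∈ Algebra.adjoin ℚ s := by
    induction hy using Submonoid.closure_induction_left with
    | one => exact B.d_one ▸ zero_mem _
    | mul_left a ha y hy ih =>
      obtain ⟨i, hai⟩ := hs a ha
      rw [B.leibniz hai]
      have hy' : y ∈ Algebra.adjoin ℚ s := Submonoid.closure_le.2 Algebra.subset_adjoin hy
      exact add_mem (Subalgebra.mul_mem _ (hd a ha) hy')
        (Subalgebra.smul_mem _ (Subalgebra.mul_mem _ (Algebra.subset_adjoin ha) ih) _)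
  rw [← Subalgebra.mem_toSubmodule, Algebra.adjoin_eq_span] at hx
  exact (Submodule.span_le (p := (Algebra.adjoin ℚ s).toSubmodule.comap B.d)).2 d_mem_of_monomial hx

end CDGA

section gensBelow

variable {M : CDGA} (F : FreeGens M)

theorem mem_gensBelow_of_mem_V {i k : ℕ} (hik : i ≤ k) {v : M.carrier} (hv : v ∈ F.V i) :
    v ∈ gensBelow F k :=
  Algebra.subset_adjoin ⟨i, hik, hv⟩

theorem gensBelow_mono : Monotone (gensBelow F) := fun _ _ hij =>
  Algebra.adjoin_mono fun _ ⟨l, hl, hx⟩ => ⟨l, hl.trans hij, hx⟩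

theorem gensBelow_succ_eq {k : ℕ} (hV : F.V (k + 1) = ⊥) :
    gensBelow F (k + 1) = gensBelow F k := by
  refine le_antisymm (Algebra.adjoin_le ?_) (gensBelow_mono F k.le_succ)
  rintro x ⟨i, hi, hx⟩
  obtain hik | rfl := Nat.le_succ_iff.1 hi
  · exact mem_gensBelow_of_mem_V F hik hx
  · obtain rfl : x = 0 := by simpa [hV] using hx
    exact zero_mem _

end gensBelow

namespace FreeGens

variable {M : CDGA} (F : FreeGens M)

theorem gAlgHom_ext {C : CDGA} {g h : GAlgHom M C}
    (hgh : ∀ i, ∀ v ∈ F.V i, g.toFun v = h.toFun v) : g = h :=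
  (F.free C (fun i => h.toFun.toLinearMap ∘ₗ (F.V i).subtype)
    fun i v => h.map_grade i _ (F.V_le i v.2)).unique (fun i v => hgh i v v.2) fun _ _ => rfl

theorem exists_section_directSumCoe {A : ℕ → Submodule ℚ M.carrier} [SetLike.GradedMonoid A]
    (hA : ∀ i, A i ≤ M.grade i) (hV : ∀ i, F.V i ≤ A i) :
    ∃ g : GAlgHom M (M.directSum A hA), (M.directSumCoe A hA).comp g = GAlgHom.id M := by
  obtain ⟨g, hg, -⟩ := F.free (M.directSum A hA)
    (fun i => DirectSum.lof ℚ ℕ (fun i => A i) i ∘ₗ Submodule.inclusion (hV i))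
    fun _ _ => ⟨_, rfl⟩
  refine ⟨g, F.gAlgHom_ext fun i v hv => ?_⟩
  exact (congrArg (M.directSumCoe A hA).toFun (hg i ⟨v, hv⟩)).trans (DirectSum.coeAlgHom_of A i _)

theorem isInternal_grade {M : CDGA} (F : FreeGens M) : DirectSum.IsInternal M.grade :=
  let ⟨_, hg⟩ := F.exists_section_directSumCoe (fun _ => le_rfl) F.V_le
  CDGA.isInternal_of_section hg

theorem grade_le_of_V_le {A : ℕ → Submodule ℚ M.carrier} [SetLike.GradedMonoid A]
    (hA : ∀ i, A i ≤ M.grade i) (hV : ∀ i, F.V i ≤ A i) (i : ℕ) : M.grade i ≤ A i := fun _ hx =>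
  let ⟨_, hg⟩ := F.exists_section_directSumCoe hA hV
  (CDGA.exists_eq_lof_of_section hg hx).1

/-- The degree `i` part of the subalgebra `M_i` generated in degrees at most `i`. It turns out to be
all of `M.grade i`, by `grade_le_gensBelow`. -/
def gradeBelow (i : ℕ) : Submodule ℚ M.carrier :=
  M.grade i ⊓ (gensBelow F i).toSubmodule

instance gradedMonoid_gradeBelow : SetLike.GradedMonoid F.gradeBelow where
  one_mem := ⟨M.one_mem, one_mem (gensBelow F 0)⟩
  mul_mem i j _ _ hx hy := ⟨M.mul_mem hx.1 hy.1, (gensBelow F (i + j)).mul_mem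
    (gensBelow_mono F (i.le_add_right j) hx.2) (gensBelow_mono F (j.le_add_left i) hy.2)⟩

theorem grade_le_gensBelow (i : ℕ) : M.grade i ≤ (gensBelow F i).toSubmodule :=
  (F.grade_le_of_V_le (A := F.gradeBelow) (fun _ => inf_le_left)
    (fun i _ hv => ⟨F.V_le i hv, mem_gensBelow_of_mem_V F le_rfl hv⟩) i).trans inf_le_right

theorem exists_mem_gensBelow_d_eq {n : ℕ} {z : M.carrier} (hz : z ∈ M.grade (n + 1))
    (hex : M.exactAt z) : ∃ e ∈ gensBelow F n, M.d e = z := by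
  obtain ⟨e, he, hde⟩ := CDGA.exists_mem_grade_d_eq F.isInternal_grade hz hex
  exact ⟨e, F.grade_le_gensBelow n he, hde⟩

theorem d_mem_gensBelow {k : ℕ} (hV : F.V (k + 1) = ⊥) {x : M.carrier} (hx : x ∈ gensBelow F k) :
    M.d x ∈ gensBelow F k := by
  refine CDGA.d_mem_adjoin ?_ ?_ hx
  · rintro v ⟨i, -, hv⟩
    exact ⟨i, F.V_le i hv⟩
  · rintro v ⟨i, hi, hv⟩
    have hdv : M.d v ∈ gensBelow F (i + 1) := F.grade_le_gensBelow _ (M.d_grade (F.V_le i hv))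
    change M.d v ∈ gensBelow F k
    rw [← gensBelow_succ_eq F hV]
    exact gensBelow_mono F (Nat.succ_le_succ hi) hdv

theorem eq_zero_of_mem_V_of_mem_gensBelow {k m : ℕ} (hkm : k < m) {v : M.carrier}
    (hv : v ∈ F.V m) (hv' : v ∈ gensBelow F k) : v = 0 := by
  -- The endomorphism killing the generators of degree `m` and fixing the others.
  obtain ⟨g, hg, -⟩ := F.free M (fun i => if i = m then 0 else (F.V i).subtype) fun i v => by
    split_ifs
    · exact zero_mem _
    · exact F.V_le i v.2
  have g_eq_id : Set.EqOn g.toFun (AlgHom.id ℚ M.carrier) (gensBelow F k) := by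
    refine AlgHom.eqOn_adjoin_iff.2 ?_
    rintro x ⟨i, hi, hx⟩
    simpa [(hi.trans_lt hkm).ne] using hg i ⟨x, hx⟩
  calc
    v = g.toFun v := (g_eq_id hv').symm
    _ = 0 := by simpa using hg m ⟨v, hv⟩

/-- Every cohomology class of degree `i` is represented by an element of `V^i`: the property
of the minimal model of a bouquet on which the vanishing of `H^i(M_{i-1})` rests. -/
def RepresentsCohomology (i : ℕ) : Prop :=
  ∀ z ∈ M.grade i, M.d z = 0 → ∃ v ∈ F.V i, M.exactAt (z - v)

theorem RepresentsCohomology.exists_mem_gensBelow_d_eq {F : FreeGens M} {n : ℕ}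
    (hrep : F.RepresentsCohomology (n + 1)) (hd : ∀ x ∈ gensBelow F n, M.d x ∈ gensBelow F n)
    {z : M.carrier} (hz : z ∈ gensBelow F n) (hzn : z ∈ M.grade (n + 1)) (hdz : M.d z = 0) :
    ∃ e ∈ gensBelow F n, M.d e = z := by
  obtain ⟨v, hv, hex⟩ := hrep z hzn hdz
  obtain ⟨e, he, hde⟩ := F.exists_mem_gensBelow_d_eq (sub_mem hzn (F.V_le _ hv)) hex
  have hv_mem : v ∈ gensBelow F n := by
    simpa [hde] using sub_mem hz (hd e he)
  obtain rfl := F.eq_zero_of_mem_V_of_mem_gensBelow n.lt_succ_self hv hv_mem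
  exact ⟨e, he, by simpa using hde⟩

end FreeGens

theorem stmt9_general {M : CDGA} (F : FreeGens M) {k : ℕ} (hV : F.V (k + 1) = ⊥)
    (hrep₁ : F.RepresentsCohomology (k + 1)) (hrep₂ : F.RepresentsCohomology (k + 2)) :
    (∀ z ∈ gensBelow F k, z ∈ M.grade (k + 1) → M.d z = 0 →
      ∃ e ∈ gensBelow F k, M.d e = z) ∧
    (∀ z ∈ gensBelow F k, z ∈ M.grade (k + 2) → M.d z = 0 →
      ∃ e ∈ gensBelow F k, M.d e = z) := by
  have hd : ∀ x ∈ gensBelow F k, M.d x ∈ gensBelow F k := fun _ => F.d_mem_gensBelow hV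
  refine ⟨fun z => hrep₁.exists_mem_gensBelow_d_eq hd, fun z => ?_⟩
  rw [← gensBelow_succ_eq F hV] at hd ⊢
  exact hrep₂.exists_mem_gensBelow_d_eq hd

/-- for a minimal model `M` of a bouquet of odd algebraic spheres (generators
odd, positive classes represented by generators) and odd `k`, the sub-DGA `M_k` generated
by generators of degree ≤ k satisfies `H^{k+1}(M_k) = 0` and `H^{k+2}(M_k) = 0`. -/
theorem stmt9 (S M : CDGA) (hS : IsBouquet S) (F : FreeGens M)
    (hmin : ∀ z, M.d z ∈ M.posSq) (f : CDGAHom M S) (hf : QuasiIso f)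
    (hodd : ∀ k : ℕ, F.V (2 * k) = ⊥)
    (hrep : ∀ i : ℕ, 1 ≤ i → ∀ z ∈ M.grade i, M.d z = 0 →
      ∃ v ∈ F.V i, M.d v = 0 ∧ M.exactAt (z - v))
    (k : ℕ) (hk : Odd k)
    (hclosed : ∀ z ∈ gensBelow F k, M.d z ∈ gensBelow F k) :
    (∀ z ∈ gensBelow F k, z ∈ M.grade (k + 1) → M.d z = 0 →
      ∃ e ∈ gensBelow F k, M.d e = z) ∧
    (∀ z ∈ gensBelow F k, z ∈ M.grade (k + 2) → M.d z = 0 →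
      ∃ e ∈ gensBelow F k, M.d e = z) := by
  have hrep' (i : ℕ) (hi : 1 ≤ i) : F.RepresentsCohomology i := fun z hz hdz =>
    (hrep i hi z hz hdz).imp fun _ ⟨hv, _, hex⟩ => ⟨hv, hex⟩
  obtain ⟨m, rfl⟩ := hk
  exact stmt9_general F (hodd (m + 1)) (hrep' _ (Nat.le_add_left ..)) (hrep' _ (Nat.le_add_left ..))

end PaperDGA
end

section
/- Let x be an element of odd degree 2k+1 > 1 in a commutative DGA of the form Λ(x)⊗ΛV with dx = 0, where the fiber differential d̄ on ΛV is the reduction setting x to 0. Suppose x = dv for some v ∈ ΛV (so deg v = 2k, d̄v = 0), and suppose v^n is d̄-exact in ΛV for some n ≥ 2, i.e., v^n = u₀·x + du for some u₀, u ∈ ΛV. Then v^{n-1} is also d̄-exact: v^{n-1} = (1/n) d̄u₀ modulo the ideal generated by x. -/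
/-!  Common setup: commutative differential graded algebras (CDGAs) over ℚ,
graded by ℕ, with graded commutativity and the graded Leibniz rule. -/

namespace PaperDGA

/-! Differentiating `v ^ n = u₀ * x + d u` with `x = d v` gives
`n • (v ^ (n - 1) * x) = d u₀ * x`, so `v ^ (n - 1) - n⁻¹ • d u₀` annihilates `x`.
As `Λ(x) ⊗ ΛV` is free over `ΛV` on `1, x` and `x * x = 0`, the annihilator of `x` is the
ideal generated by `x`. -/

theorem exists_eq_mul_of_mul_eq_zero {R σ : Type*} [Semiring R] [SetLike σ R] [ZeroMemClass σ R]
    {S : σ} {x : R} (hdec : ∀ z : R, ∃! p : S × S, z = (p.1 : R) + (p.2 : R) * x)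
    (hxx : x * x = 0) {z : R} (hz : z * x = 0) : ∃ c, z = c * x := by
  obtain ⟨⟨a, b⟩, hab : z = a + b * x, -⟩ := hdec z
  have hax : (a : R) * x = 0 := by
    rwa [hab, add_mul, mul_assoc, hxx, mul_zero, add_zero] at hz
  have hpair : ((0, a) : S × S) = (0, 0) :=
    (hdec 0).unique (by simp [hax]) (by simp)
  have ha : a = 0 := congrArg Prod.snd hpair
  exact ⟨b, by rw [hab, ha, ZeroMemClass.coe_zero, zero_add]⟩

namespace CDGA

variable {A : CDGA} {i : ℕ} {v w x : A.carrier}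

theorem induction_on_homogeneous {p : A.carrier → Prop} (z : A.carrier)
    (mem : ∀ i, ∀ y ∈ A.grade i, p y) (add : ∀ y z, p y → p z → p (y + z)) : p z :=
  Submodule.iSup_induction A.grade (motive := p) (A.grade_sup ▸ Submodule.mem_top) mem
    (mem 0 0 (zero_mem _)) add

theorem d_mul_of_d_eq_zero (hw : A.d w = 0) (z : A.carrier) : A.d (z * w) = A.d z * w := by
  induction z using induction_on_homogeneous with
  | mem i y hy => rw [A.leibniz hy, hw, mul_zero, smul_zero, add_zero]
  | add y z hy hz => rw [add_mul, map_add, hy, hz, map_add, add_mul]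

theorem commute_of_even (hi : Even i) (hv : v ∈ A.grade i) (z : A.carrier) :
    Commute v z := by
  induction z using induction_on_homogeneous with
  | mem j y hy =>
    have h := A.gcomm hv hy
    rwa [(hi.mul_right j).neg_one_pow, one_smul] at h
  | add y z hy hz => exact hy.add_right hz

theorem mul_self_eq_zero_of_odd (hi : Odd i) (hx : x ∈ A.grade i) : x * x = 0 := by
  have h : x * x = -(x * x) := by
    simpa only [(hi.mul hi).neg_one_pow, neg_smul, one_smul] using A.gcomm hx hx
  have : IsAddTorsionFree A.carrier := IsAddTorsionFree.of_module_rat A.carrier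
  exact self_eq_neg.mp h

theorem d_pow_succ_of_even (hi : Even i) (hv : v ∈ A.grade i) (n : ℕ) :
    A.d (v ^ (n + 1)) = (n + 1) • (v ^ n * A.d v) := by
  induction n with
  | zero => simp
  | succ n ih =>
    calc A.d (v ^ (n + 2)) = A.d v * v ^ (n + 1) + v * A.d (v ^ (n + 1)) := by
          rw [pow_succ', A.leibniz hv, hi.neg_one_pow, one_smul]
      _ = v ^ (n + 1) * A.d v + (n + 1) • (v ^ (n + 1) * A.d v) := by
          rw [ih, mul_smul_comm, ← mul_assoc, ← pow_succ',
            ((commute_of_even hi hv _).pow_left (n + 1)).eq]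
      _ = (n + 1 + 1) • (v ^ (n + 1) * A.d v) := (succ_nsmul' _ _).symm

end CDGA

theorem stmt15_general (A : CDGA) {i : ℕ} (hi : Even i) {v : A.carrier} (hv : v ∈ A.grade i)
    (hann : ∀ z, z * A.d v = 0 → ∃ c, z = c * A.d v) {n : ℕ} (hn : n ≠ 0) {u₀ : A.carrier}
    (hclosed : A.d (v ^ n - u₀ * A.d v) = 0) :
    ∃ c, v ^ (n - 1) - (n : ℚ)⁻¹ • A.d u₀ = c * A.d v := by
  obtain ⟨m, rfl⟩ := Nat.exists_eq_succ_of_ne_zero hn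
  have hd : (m + 1) • (v ^ m * A.d v) = A.d u₀ * A.d v := by
    rwa [map_sub, CDGA.d_pow_succ_of_even hi hv, CDGA.d_mul_of_d_eq_zero (A.d_sq v),
      sub_eq_zero] at hclosed
  apply hann
  rw [sub_mul, smul_mul_assoc, ← hd, ← Nat.cast_smul_eq_nsmul ℚ, inv_smul_smul₀ (by positivity),
    Nat.succ_sub_one, sub_self]

/-- in `Λ(x)⊗ΛV` (every element uniquely `a + b·x` with `a,b ∈ ΛV`), with
`x` of odd degree `2k+1 > 1`, `dx = 0`, `x = dv`, `v ∈ ΛV` of degree `2k`: if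
`v^n = u₀·x + du` with `u₀, u ∈ ΛV` and `n ≥ 2`, then `v^{n-1} = (1/n)·d̄u₀` modulo the
ideal generated by `x`. -/
theorem stmt15 (A : CDGA) (k : ℕ) (hk : 0 < k) (x : A.carrier)
    (hx : x ∈ A.grade (2 * k + 1)) (hdx : A.d x = 0)
    (S : Subalgebra ℚ A.carrier)
    (hdec : ∀ z : A.carrier, ∃! p : ↥S × ↥S,
      z = (p.1 : A.carrier) + (p.2 : A.carrier) * x)
    (v : A.carrier) (hv : v ∈ S) (hvg : v ∈ A.grade (2 * k)) (hdv : A.d v = x)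
    (n : ℕ) (hn : 2 ≤ n) (u₀ u : A.carrier) (hu₀ : u₀ ∈ S) (hu : u ∈ S)
    (hex : v ^ n = u₀ * x + A.d u) :
    ∃ c : A.carrier, v ^ (n - 1) - ((n : ℚ)⁻¹) • A.d u₀ = c * x := by
  subst hdv
  have hxx := CDGA.mul_self_eq_zero_of_odd ⟨k, rfl⟩ hx
  exact stmt15_general A (even_two_mul k) hvg (fun _ ↦ exists_eq_mul_of_mul_eq_zero hdec hxx)
    (by lia) (by rw [hex, add_sub_cancel_left, A.d_sq])

end PaperDGA
end
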